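/- Let B = C(D̄; ℝ)^n with norm ‖α‖ = max over components of the sup norms, let μ₀ = μ₀^g ⊗ ∏_{i=1}^n μ₀^i be a probability measure whose log-permeability components α_i are independent Gaussian measures μ₀^i = N(m_i, C_i) charging C(D̄;ℝ), and let 𝒢 be measurable with |𝒢(u)|_Γ ≤ C max_i exp(‖α_i‖_∞) for a constant C > 0. Define Φ(u;y) = ½|y − 𝒢(u)|_Γ² and let μ^y be the posterior with dμ^y/dμ₀ = Z(y)^{-1} exp(−Φ(·;y)), Z(y) = ∫ exp(−Φ(u;y)) dμ₀ > 0. Then for every fixed r > 0 there exist constants C₁ = C₁(r), C₂ = C₂(r) such that for all y, y' with max{|y|_Γ, |y'|_Γ} < r: d_TV(μ^y, μ^{y'}) ≤ C₁ |y − y'|_Γ and d_Hell(μ^y, μ^{y'}) ≤ C₂ |y − y'|_Γ. -/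

import Mathlib

open Real Matrix MeasureTheory ProbabilityTheory

/-- The covariance-weighted norm `|z|_Γ = |Γ^{-1/2} z|`, equivalently `|z|_Γ² = ⟨z, Γ⁻¹ z⟩`. -/
noncomputable def covNorm {J : ℕ} (Γ : Matrix (Fin J) (Fin J) ℝ) (z : Fin J → ℝ) : ℝ :=
  Real.sqrt (z ⬝ᵥ (Γ⁻¹ *ᵥ z))

/-- The model–data misfit `Φ(u;y) = ½ |y − 𝒢(u)|_Γ²`. -/
noncomputable def misfit {U : Type*} {J : ℕ} (Γ : Matrix (Fin J) (Fin J) ℝ)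
    (G : U → Fin J → ℝ) (u : U) (y : Fin J → ℝ) : ℝ :=
  (covNorm Γ (y - G u)) ^ 2 / 2

/-- The density `Z(y)⁻¹ exp(−Φ(u;y))` of the Bayesian posterior `μ^y` with respect to the
prior `μ₀`. -/
noncomputable def postDensity {U : Type*} [MeasurableSpace U] {J : ℕ}
    (Γ : Matrix (Fin J) (Fin J) ℝ) (G : U → Fin J → ℝ) (μ₀ : Measure U)
    (y : Fin J → ℝ) (u : U) : ℝ :=
  (∫ u', Real.exp (-(misfit Γ G u' y)) ∂μ₀)⁻¹ * Real.exp (-(misfit Γ G u y))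

/-!
The square root of the likelihood, `√exp(−Φ(u;y)) = exp(−|y − 𝒢(u)|_Γ² / 4)`, is a Lipschitz
function of `y` uniformly in `u`, because `x ↦ exp(−x²)` is Lipschitz on all of `ℝ`. Hence the
unnormalized densities depend on `y` in a Lipschitz way in the Hellinger distance, that is, their
square roots do in `L²(μ₀)`. The square root of the posterior density is the normalization
`s / ‖s‖` of `s = √exp(−Φ(·;y))` in `L²(μ₀)`, and normalization satisfies
`‖s / ‖s‖ − t / ‖t‖‖ ≤ 2 ‖s − t‖ / ‖s‖`, where `‖s‖² = Z(y)` is bounded below on `|y|_Γ ≤ r`.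
This gives the Hellinger estimate, and `d_TV ≤ √2 d_Hell` gives the total variation estimate.
-/

open scoped ENNReal

section Distances

variable {α : Type*} [MeasurableSpace α] {μ : Measure α}

/-- The total variation distance `d_TV` between the measures with `μ`-densities `f` and `g`. -/
noncomputable def tvDist (μ : Measure α) (f g : α → ℝ) : ℝ :=
  (1 / 2) * ∫ x, |f x - g x| ∂μ

/-- The Hellinger distance `d_Hell` between the measures with `μ`-densities `f` and `g`. The
densities need not have integral one. -/
noncomputable def hellingerDist (μ : Measure α) (f g : α → ℝ) : ℝ :=
  √((1 / 2) * ∫ x, (√(f x) - √(g x)) ^ 2 ∂μ)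

lemma lpNorm_two_eq_sqrt_integral_sq {f : α → ℝ} (hf : AEStronglyMeasurable f μ) :
    lpNorm f 2 μ = √(∫ x, f x ^ 2 ∂μ) := by
  simp [lpNorm_eq_integral_norm_rpow_toReal two_ne_zero ENNReal.ofNat_ne_top hf,
    Real.sqrt_eq_rpow]

lemma lpNorm_inv_smul_sub_inv_smul_le {E : Type*} [NormedAddCommGroup E] [NormedSpace ℝ E]
    {p : ℝ≥0∞} (hp : 1 ≤ p) {f g : α → E} (hf : MemLp f p μ) (hg : MemLp g p μ)
    (hf₀ : lpNorm f p μ ≠ 0) :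
    lpNorm ((lpNorm f p μ)⁻¹ • f - (lpNorm g p μ)⁻¹ • g) p μ
      ≤ 2 / lpNorm f p μ * lpNorm (f - g) p μ := by
  set a := lpNorm f p μ
  set b := lpNorm g p μ
  have ha : 0 < a := lpNorm_nonneg.lt_of_ne' hf₀
  have hb : 0 ≤ b := lpNorm_nonneg
  have hab : |b - a| ≤ lpNorm (f - g) p μ := by
    have hba := lpNorm_le_lpNorm_add_lpNorm_sub' (f := f) hg hp
    have hab := lpNorm_le_lpNorm_add_lpNorm_sub (f := g) hf hp
    rw [abs_le]
    constructor <;> linarith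
  have h_inv : |a⁻¹ - b⁻¹| * b ≤ a⁻¹ * lpNorm (f - g) p μ := by
    rcases hb.eq_or_lt with hb | hb
    · rw [← hb, mul_zero]
      exact mul_nonneg (inv_nonneg.2 ha.le) lpNorm_nonneg
    · calc |a⁻¹ - b⁻¹| * b = a⁻¹ * |b - a| := by
            rw [inv_sub_inv ha.ne' hb.ne', abs_div, abs_of_pos (mul_pos ha hb)]
            field_simp
        _ ≤ a⁻¹ * lpNorm (f - g) p μ := by gcongr
  calc lpNorm (a⁻¹ • f - b⁻¹ • g) p μ
      = lpNorm (a⁻¹ • (f - g) + (a⁻¹ - b⁻¹) • g) p μ := by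
        congr 1
        module
    _ ≤ lpNorm (a⁻¹ • (f - g)) p μ + lpNorm ((a⁻¹ - b⁻¹) • g) p μ :=
        lpNorm_add_le ((hf.sub hg).const_smul _) hp
    _ = a⁻¹ * lpNorm (f - g) p μ + |a⁻¹ - b⁻¹| * b := by
        simp [lpNorm_const_smul, abs_of_pos ha, b]
    _ ≤ 2 / a * lpNorm (f - g) p μ := by
        rw [div_eq_mul_inv]
        linarith

lemma memLp_two_sqrt {f : α → ℝ} (hf : Integrable f μ) (hf₀ : 0 ≤ f) :
    MemLp (fun x ↦ √(f x)) 2 μ := by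
  refine (memLp_two_iff_integrable_sq hf.aemeasurable.sqrt.aestronglyMeasurable).2 ?_
  simpa only [Real.sq_sqrt (hf₀ _)] using hf

lemma lpNorm_two_sqrt {f : α → ℝ} (hf : AEMeasurable f μ) (hf₀ : 0 ≤ f) :
    lpNorm (fun x ↦ √(f x)) 2 μ = √(∫ x, f x ∂μ) := by
  simp only [lpNorm_two_eq_sqrt_integral_sq hf.sqrt.aestronglyMeasurable, Real.sq_sqrt (hf₀ _)]

lemma hellingerDist_eq_lpNorm {f g : α → ℝ} (hf : AEMeasurable f μ) (hg : AEMeasurable g μ) :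
    hellingerDist μ f g = √(1 / 2) * lpNorm ((fun x ↦ √(f x)) - fun x ↦ √(g x)) 2 μ := by
  rw [lpNorm_two_eq_sqrt_integral_sq (hf.sqrt.sub hg.sqrt).aestronglyMeasurable,
    hellingerDist, Real.sqrt_mul (by norm_num)]
  rfl

lemma hellingerDist_normalize_le {f g : α → ℝ} (hf : Integrable f μ) (hg : Integrable g μ)
    (hf₀ : 0 ≤ f) (hg₀ : 0 ≤ g) (hZ : 0 < ∫ x, f x ∂μ) :
    hellingerDist μ (fun x ↦ (∫ x', f x' ∂μ)⁻¹ * f x) (fun x ↦ (∫ x', g x' ∂μ)⁻¹ * g x)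
      ≤ 2 / √(∫ x, f x ∂μ) * hellingerDist μ f g := by
  have h_sqrt : ∀ {h : α → ℝ}, Integrable h μ → 0 ≤ h →
      (fun x ↦ √((∫ x', h x' ∂μ)⁻¹ * h x)) =
        (lpNorm (fun x ↦ √(h x)) 2 μ)⁻¹ • fun x ↦ √(h x) := by
    intro h hh hh₀
    funext x
    rw [lpNorm_two_sqrt hh.aemeasurable hh₀,
      Real.sqrt_mul (inv_nonneg.2 (integral_nonneg hh₀)), Real.sqrt_inv, Pi.smul_apply,
      smul_eq_mul]
  have h_norm := lpNorm_two_sqrt hf.aemeasurable hf₀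
  have h_le := lpNorm_inv_smul_sub_inv_smul_le one_le_two (memLp_two_sqrt hf hf₀)
    (memLp_two_sqrt hg hg₀) (h_norm.trans_ne (Real.sqrt_pos.2 hZ).ne')
  rw [hellingerDist_eq_lpNorm (hf.aemeasurable.const_mul _) (hg.aemeasurable.const_mul _),
    hellingerDist_eq_lpNorm hf.aemeasurable hg.aemeasurable, h_sqrt hf hf₀, h_sqrt hg hg₀,
    ← h_norm, mul_left_comm]
  gcongr

lemma integral_abs_mul_abs_le_lpNorm_two_mul_lpNorm_two {f g : α → ℝ} (hf : MemLp f 2 μ)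
    (hg : MemLp g 2 μ) : ∫ x, |f x| * |g x| ∂μ ≤ lpNorm f 2 μ * lpNorm g 2 μ := by
  have h_holder := integral_mul_norm_le_Lp_mul_Lq Real.HolderConjugate.two_two
    (f := f) (g := g) (by simpa using hf) (by simpa using hg)
  simpa [lpNorm_eq_integral_norm_rpow_toReal, hf.1, hg.1] using h_holder

/-- Cauchy–Schwarz applied to the factorization `f - g = (√f - √g) (√f + √g)`. -/
lemma tvDist_le_sqrt_two_mul_hellingerDist {f g : α → ℝ} (hf : Integrable f μ)
    (hg : Integrable g μ) (hf₀ : 0 ≤ f) (hg₀ : 0 ≤ g) (hf₁ : ∫ x, f x ∂μ ≤ 1)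
    (hg₁ : ∫ x, g x ∂μ ≤ 1) :
    tvDist μ f g ≤ √2 * hellingerDist μ f g := by
  set s : α → ℝ := fun x ↦ √(f x) with hs
  set t : α → ℝ := fun x ↦ √(g x) with ht
  have hs_mem : MemLp s 2 μ := memLp_two_sqrt hf hf₀
  have ht_mem : MemLp t 2 μ := memLp_two_sqrt hg hg₀
  have h_factor (x : α) : |f x - g x| = |(s - t) x| * |(s + t) x| := by
    rw [← abs_mul, Pi.sub_apply, Pi.add_apply, mul_comm, ← sq_sub_sq, hs, ht,
      Real.sq_sqrt (hf₀ x), Real.sq_sqrt (hg₀ x)]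
  have h_add : lpNorm (s + t) 2 μ ≤ 2 :=
    calc lpNorm (s + t) 2 μ ≤ lpNorm s 2 μ + lpNorm t 2 μ := lpNorm_add_le hs_mem one_le_two
      _ = √(∫ x, f x ∂μ) + √(∫ x, g x ∂μ) := by
        rw [lpNorm_two_sqrt hf.aemeasurable hf₀, lpNorm_two_sqrt hg.aemeasurable hg₀]
      _ ≤ 1 + 1 := add_le_add (Real.sqrt_le_one.2 hf₁) (Real.sqrt_le_one.2 hg₁)
      _ = 2 := one_add_one_eq_two
  calc tvDist μ f g = (1 / 2) * ∫ x, |(s - t) x| * |(s + t) x| ∂μ := by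
        simp only [tvDist, h_factor]
    _ ≤ (1 / 2) * (lpNorm (s - t) 2 μ * lpNorm (s + t) 2 μ) := by
        gcongr
        exact integral_abs_mul_abs_le_lpNorm_two_mul_lpNorm_two (hs_mem.sub ht_mem)
          (hs_mem.add ht_mem)
    _ ≤ (1 / 2) * (lpNorm (s - t) 2 μ * 2) := by
        gcongr
        exact lpNorm_nonneg
    _ = √2 * hellingerDist μ f g := by
        rw [hellingerDist_eq_lpNorm hf.aemeasurable hg.aemeasurable, ← mul_assoc √2,
          ← Real.sqrt_mul zero_le_two]
        rw [mul_one_div_cancel two_ne_zero, Real.sqrt_one]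
        ring

lemma hellingerDist_le_of_abs_sqrt_sub_sqrt_le [IsFiniteMeasure μ] {f g : α → ℝ} {δ : ℝ}
    (h : ∀ x, |√(f x) - √(g x)| ≤ δ) :
    hellingerDist μ f g ≤ √((1 / 2) * μ.real Set.univ) * |δ| := by
  have h_int : ∫ x, (√(f x) - √(g x)) ^ 2 ∂μ ≤ μ.real Set.univ * δ ^ 2 :=
    calc ∫ x, (√(f x) - √(g x)) ^ 2 ∂μ ≤ ∫ _, δ ^ 2 ∂μ :=
          integral_mono_of_nonneg (ae_of_all _ fun x ↦ sq_nonneg _) (integrable_const _)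
            (ae_of_all _ fun x ↦ sq_le_sq.2 ((h x).trans (le_abs_self δ)))
      _ = μ.real Set.univ * δ ^ 2 := by rw [integral_const, smul_eq_mul]
  calc hellingerDist μ f g ≤ √((1 / 2) * μ.real Set.univ * δ ^ 2) := by
        rw [hellingerDist, mul_assoc]
        gcongr
    _ = √((1 / 2) * μ.real Set.univ) * |δ| := by
        rw [Real.sqrt_mul (by positivity), Real.sqrt_sq_eq_abs]

end Distances

lemma lipschitzWith_exp_neg_sq : LipschitzWith 1 fun x : ℝ ↦ Real.exp (-x ^ 2) := by
  have h_deriv (x : ℝ) :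
      HasDerivAt (fun x : ℝ ↦ Real.exp (-x ^ 2)) (Real.exp (-x ^ 2) * -(2 * x)) x := by
    simpa using (hasDerivAt_pow 2 x).neg.exp
  refine lipschitzWith_of_nnnorm_deriv_le (fun x ↦ (h_deriv x).differentiableAt) fun x ↦ ?_
  have h_abs : |2 * x| ≤ Real.exp (x ^ 2) := by
    have := Real.add_one_le_exp (x ^ 2)
    rw [abs_le]
    constructor <;> nlinarith [sq_nonneg (x - 1), sq_nonneg (x + 1)]
  rw [(h_deriv x).deriv, ← NNReal.coe_le_coe, coe_nnnorm, norm_mul, norm_neg, Real.norm_eq_abs,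
    Real.norm_eq_abs, Real.abs_exp, Real.exp_neg]
  exact inv_mul_le_one_of_le₀ h_abs (Real.exp_nonneg _)

section CovNorm

variable {J : ℕ} {Γ : Matrix (Fin J) (Fin J) ℝ}

lemma exists_seminorm_eq_covNorm (hΓ : Γ.PosSemidef) :
    ∃ p : Seminorm ℝ (Fin J → ℝ), ∀ z, p z = covNorm Γ z := by
  let := Γ⁻¹.toSeminormedAddCommGroup hΓ.inv
  let := Γ⁻¹.toInnerProductSpace hΓ.inv
  refine ⟨normSeminorm ℝ (Fin J → ℝ), fun z ↦ ?_⟩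
  change √ _ = √ _
  rw [dotProduct_comm]
  rfl

lemma continuous_covNorm (Γ : Matrix (Fin J) (Fin J) ℝ) : Continuous (covNorm Γ) := by
  unfold covNorm
  fun_prop

lemma covNorm_nonneg (Γ : Matrix (Fin J) (Fin J) ℝ) (z : Fin J → ℝ) : 0 ≤ covNorm Γ z :=
  Real.sqrt_nonneg _

lemma covNorm_sub_le (hΓ : Γ.PosSemidef) (z w : Fin J → ℝ) :
    covNorm Γ (z - w) ≤ covNorm Γ z + covNorm Γ w := by
  obtain ⟨p, hp⟩ := exists_seminorm_eq_covNorm hΓ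
  simpa only [hp] using map_sub_le_add p z w

lemma abs_covNorm_sub_covNorm_le (hΓ : Γ.PosSemidef) (z w : Fin J → ℝ) :
    |covNorm Γ z - covNorm Γ w| ≤ covNorm Γ (z - w) := by
  obtain ⟨p, hp⟩ := exists_seminorm_eq_covNorm hΓ
  simpa only [hp] using abs_sub_map_le_sub p z w

end CovNorm

section Posterior

variable {U : Type*} {J : ℕ} {Γ : Matrix (Fin J) (Fin J) ℝ} {G : U → Fin J → ℝ}

/-- The likelihood `exp(−Φ(u;y))`, i.e. the unnormalized posterior density as a function of `u`. -/
noncomputable def likelihood (Γ : Matrix (Fin J) (Fin J) ℝ) (G : U → Fin J → ℝ)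
    (y : Fin J → ℝ) (u : U) : ℝ :=
  Real.exp (-(misfit Γ G u y))

lemma likelihood_nonneg (Γ : Matrix (Fin J) (Fin J) ℝ) (G : U → Fin J → ℝ) (y : Fin J → ℝ) :
    0 ≤ likelihood Γ G y :=
  fun _ ↦ Real.exp_nonneg _

lemma sqrt_likelihood (Γ : Matrix (Fin J) (Fin J) ℝ) (G : U → Fin J → ℝ) (y : Fin J → ℝ) (u : U) :
    √(likelihood Γ G y u) = Real.exp (-(covNorm Γ (y - G u) / 2) ^ 2) := by
  rw [likelihood, ← Real.exp_half, misfit]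
  ring_nf

lemma abs_sqrt_likelihood_sub_le (hΓ : Γ.PosSemidef) (G : U → Fin J → ℝ) (y y' : Fin J → ℝ)
    (u : U) :
    |√(likelihood Γ G y u) - √(likelihood Γ G y' u)| ≤ covNorm Γ (y - y') / 2 := by
  have h_lip := lipschitzWith_exp_neg_sq.dist_le_mul (covNorm Γ (y - G u) / 2)
    (covNorm Γ (y' - G u) / 2)
  have h_tri := abs_covNorm_sub_covNorm_le hΓ (y - G u) (y' - G u)
  rw [sub_sub_sub_cancel_right] at h_tri
  calc |√(likelihood Γ G y u) - √(likelihood Γ G y' u)|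
      ≤ |covNorm Γ (y - G u) / 2 - covNorm Γ (y' - G u) / 2| := by
        simpa only [sqrt_likelihood, Real.dist_eq, NNReal.coe_one, one_mul] using h_lip
    _ = |covNorm Γ (y - G u) - covNorm Γ (y' - G u)| / 2 := by
        rw [← sub_div, abs_div, abs_two]
    _ ≤ covNorm Γ (y - y') / 2 := by gcongr

variable [MeasurableSpace U]

lemma postDensity_nonneg (Γ : Matrix (Fin J) (Fin J) ℝ) (G : U → Fin J → ℝ) (μ : Measure U)
    (y : Fin J → ℝ) : 0 ≤ postDensity Γ G μ y :=
  fun u ↦ mul_nonneg (inv_nonneg.2 (integral_nonneg (likelihood_nonneg Γ G y)))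
    (likelihood_nonneg Γ G y u)

variable {μ : Measure U} [IsFiniteMeasure μ]

lemma hellingerDist_likelihood_le (hΓ : Γ.PosSemidef) (G : U → Fin J → ℝ) (y y' : Fin J → ℝ) :
    hellingerDist μ (likelihood Γ G y) (likelihood Γ G y')
      ≤ √((1 / 2) * μ.real Set.univ) / 2 * covNorm Γ (y - y') := by
  have h := hellingerDist_le_of_abs_sqrt_sub_sqrt_le (μ := μ)
    (abs_sqrt_likelihood_sub_le hΓ G y y')
  rwa [abs_of_nonneg (div_nonneg (covNorm_nonneg _ _) zero_le_two), ← mul_div_assoc,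
    mul_div_right_comm] at h

lemma integrable_exp_neg_sq_div_two {f : U → ℝ} (hf : AEMeasurable f μ) :
    Integrable (fun u ↦ Real.exp (-(f u ^ 2 / 2))) μ :=
  Integrable.of_bound (C := 1) (by fun_prop) <| ae_of_all _ fun u ↦ by
    rw [Real.norm_eq_abs, Real.abs_exp, Real.exp_le_one_iff, neg_nonpos]
    positivity

lemma integrable_likelihood (Γ : Matrix (Fin J) (Fin J) ℝ) (hG : AEMeasurable G μ)
    (y : Fin J → ℝ) : Integrable (likelihood Γ G y) μ :=
  integrable_exp_neg_sq_div_two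
    ((continuous_covNorm Γ).measurable.comp_aemeasurable (hG.const_sub y))

lemma integrable_postDensity (Γ : Matrix (Fin J) (Fin J) ℝ) (hG : AEMeasurable G μ)
    (y : Fin J → ℝ) : Integrable (postDensity Γ G μ y) μ :=
  (integrable_likelihood Γ hG y).const_mul _

variable [NeZero μ]

lemma integral_likelihood_pos (Γ : Matrix (Fin J) (Fin J) ℝ) (hG : AEMeasurable G μ)
    (y : Fin J → ℝ) : 0 < ∫ u, likelihood Γ G y u ∂μ :=
  integral_exp_pos (integrable_likelihood Γ hG y)

/-- Comparison with `exp(−(r + |𝒢(u)|_Γ)² / 2)`, which is positive and independent of `y`. -/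
lemma exists_pos_forall_le_integral_likelihood (hΓ : Γ.PosSemidef) (hG : AEMeasurable G μ)
    (r : ℝ) :
    ∃ z > 0, ∀ y, covNorm Γ y ≤ r → z ≤ ∫ u, likelihood Γ G y u ∂μ := by
  have h_int : Integrable (fun u ↦ Real.exp (-((r + covNorm Γ (G u)) ^ 2 / 2))) μ :=
    integrable_exp_neg_sq_div_two
      (((continuous_covNorm Γ).measurable.comp_aemeasurable hG).const_add r)
  refine ⟨_, integral_exp_pos h_int, fun y hy ↦
    integral_mono h_int (integrable_likelihood Γ hG y) fun u ↦ ?_⟩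
  have h_nonneg := covNorm_nonneg Γ (y - G u)
  have h_le : covNorm Γ (y - G u) ≤ r + covNorm Γ (G u) :=
    (covNorm_sub_le hΓ y (G u)).trans (by gcongr)
  unfold likelihood misfit
  gcongr

lemma integral_postDensity (Γ : Matrix (Fin J) (Fin J) ℝ) (hG : AEMeasurable G μ)
    (y : Fin J → ℝ) : ∫ u, postDensity Γ G μ y u ∂μ = 1 := by
  unfold postDensity
  rw [integral_const_mul]
  exact inv_mul_cancel₀ (integral_likelihood_pos Γ hG y).ne'

lemma hellingerDist_postDensity_le (hΓ : Γ.PosSemidef) (hG : AEMeasurable G μ)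
    (y y' : Fin J → ℝ) :
    hellingerDist μ (postDensity Γ G μ y) (postDensity Γ G μ y')
      ≤ √((1 / 2) * μ.real Set.univ) / √(∫ u, likelihood Γ G y u ∂μ) * covNorm Γ (y - y') :=
  calc hellingerDist μ (postDensity Γ G μ y) (postDensity Γ G μ y')
      ≤ 2 / √(∫ u, likelihood Γ G y u ∂μ)
          * hellingerDist μ (likelihood Γ G y) (likelihood Γ G y') :=
        hellingerDist_normalize_le (integrable_likelihood Γ hG y) (integrable_likelihood Γ hG y')
          (likelihood_nonneg Γ G y) (likelihood_nonneg Γ G y') (integral_likelihood_pos Γ hG y)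
    _ ≤ 2 / √(∫ u, likelihood Γ G y u ∂μ)
          * (√((1 / 2) * μ.real Set.univ) / 2 * covNorm Γ (y - y')) := by
        gcongr
        exact hellingerDist_likelihood_le hΓ G y y'
    _ = _ := by ring

lemma tvDist_postDensity_le (Γ : Matrix (Fin J) (Fin J) ℝ) (hG : AEMeasurable G μ)
    (y y' : Fin J → ℝ) :
    tvDist μ (postDensity Γ G μ y) (postDensity Γ G μ y')
      ≤ √2 * hellingerDist μ (postDensity Γ G μ y) (postDensity Γ G μ y') :=
  tvDist_le_sqrt_two_mul_hellingerDist
    (integrable_postDensity Γ hG y) (integrable_postDensity Γ hG y')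
    (postDensity_nonneg Γ G μ y) (postDensity_nonneg Γ G μ y')
    (integral_postDensity Γ hG y).le (integral_postDensity Γ hG y').le

end Posterior

theorem posterior_lipschitz_wellPosedness_gaussian_fields_general
    {U : Type*} [MeasurableSpace U] {J : ℕ} {Γ : Matrix (Fin J) (Fin J) ℝ} (hΓ : Γ.PosDef)
    (μ₀ : Measure U) [IsFiniteMeasure μ₀] [NeZero μ₀]
    {G : U → Fin J → ℝ} (hG : AEMeasurable G μ₀) (r : ℝ) :
    ∃ C₁ C₂ : ℝ, ∀ y y' : Fin J → ℝ, covNorm Γ y ≤ r →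
      tvDist μ₀ (postDensity Γ G μ₀ y) (postDensity Γ G μ₀ y') ≤ C₁ * covNorm Γ (y - y') ∧
      hellingerDist μ₀ (postDensity Γ G μ₀ y) (postDensity Γ G μ₀ y')
        ≤ C₂ * covNorm Γ (y - y') := by
  obtain ⟨z, hz, hz_le⟩ := exists_pos_forall_le_integral_likelihood hΓ.posSemidef hG r
  set C := √((1 / 2) * μ₀.real Set.univ) / √z
  refine ⟨√2 * C, C, fun y y' hy ↦ ?_⟩
  have h_hell : hellingerDist μ₀ (postDensity Γ G μ₀ y) (postDensity Γ G μ₀ y')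
      ≤ C * covNorm Γ (y - y') := by
    refine (hellingerDist_postDensity_le hΓ.posSemidef hG y y').trans
      (mul_le_mul_of_nonneg_right ?_ (covNorm_nonneg Γ _))
    exact div_le_div_of_nonneg_left (Real.sqrt_nonneg _) (Real.sqrt_pos.2 hz)
      (Real.sqrt_le_sqrt (hz_le y hy))
  refine ⟨?_, h_hell⟩
  calc tvDist μ₀ (postDensity Γ G μ₀ y) (postDensity Γ G μ₀ y')
      ≤ √2 * hellingerDist μ₀ (postDensity Γ G μ₀ y) (postDensity Γ G μ₀ y') :=
        tvDist_postDensity_le Γ hG y y'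
    _ ≤ √2 * C * covNorm Γ (y - y') := by
        rw [mul_assoc]
        gcongr

/-- **Lipschitz well-posedness of the posterior for piecewise continuous permeabilities.**
The unknown consists of geometric parameters together with `n` continuous log-permeability
fields `α_i ∈ C(D̄;ℝ)` with independent Gaussian priors `N(m_i, C_i)` on `C(D̄;ℝ)` (here
`K` stands for the compact set `D̄`), and `|𝒢(u)|_Γ ≤ C max_i exp(‖α_i‖_∞)`.  Then for
every `r > 0` there exist `C₁(r), C₂(r)` such that for all data `y, y'` with
`max{|y|_Γ, |y'|_Γ} < r`, `d_TV(μ^y, μ^{y'}) ≤ C₁|y − y'|_Γ` and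
`d_Hell(μ^y, μ^{y'}) ≤ C₂|y − y'|_Γ`, the distances being computed via the posterior
densities with respect to the prior. -/
theorem posterior_lipschitz_wellPosedness_gaussian_fields
    {n J : ℕ} (hn : 0 < n) {V : Type*} [MeasurableSpace V]
    (K : Type*) [TopologicalSpace K] [CompactSpace K]
    [MeasurableSpace C(K, ℝ)] [BorelSpace C(K, ℝ)]
    (Γ : Matrix (Fin J) (Fin J) ℝ) (hΓ : Γ.PosDef) (hΓsymm : Γ.IsSymm)
    (νg : Measure V) [IsProbabilityMeasure νg]  -- prior on the geometric parameters
    (μG : Fin n → Measure C(K, ℝ)) [∀ i, IsProbabilityMeasure (μG i)]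
    -- each log-permeability prior μG i = N(m_i, C_i) is Gaussian on C(D̄;ℝ)
    (hGaussian : ∀ i, ∀ ℓ : C(K, ℝ) →L[ℝ] ℝ, ∃ (m : ℝ) (v : NNReal),
      (μG i).map ℓ = gaussianReal m v)
    (μ₀ : Measure (V × (Fin n → C(K, ℝ))))
    (hμ₀ : μ₀ = νg.prod (Measure.pi fun i => μG i))
    (G : (V × (Fin n → C(K, ℝ))) → Fin J → ℝ) (hGmeas : Measurable G)
    (C : ℝ) (hC : 0 < C)
    (hGbound : ∀ u : V × (Fin n → C(K, ℝ)),
      covNorm Γ (G u) ≤ C * ⨆ i, Real.exp ‖u.2 i‖)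
    (r : ℝ) (hr : 0 < r)
    (hZ : ∀ y : Fin J → ℝ, covNorm Γ y ≤ r →
      0 < ∫ u, Real.exp (-(misfit Γ G u y)) ∂μ₀) :
    ∃ C₁ C₂ : ℝ, ∀ y y' : Fin J → ℝ, covNorm Γ y < r → covNorm Γ y' < r →
      ((1 / 2) * ∫ u, |postDensity Γ G μ₀ y u - postDensity Γ G μ₀ y' u| ∂μ₀
          ≤ C₁ * covNorm Γ (y - y')) ∧
      (Real.sqrt ((1 / 2) * ∫ u,
            (Real.sqrt (postDensity Γ G μ₀ y u) -
              Real.sqrt (postDensity Γ G μ₀ y' u)) ^ 2 ∂μ₀)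
          ≤ C₂ * covNorm Γ (y - y')) := by
  subst hμ₀
  obtain ⟨C₁, C₂, h⟩ := posterior_lipschitz_wellPosedness_gaussian_fields_general hΓ
    (νg.prod (Measure.pi fun i => μG i)) hGmeas.aemeasurable r
  exact ⟨C₁, C₂, fun y y' hy _ ↦ h y y' hy.le⟩
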